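/- arXiv:1002.0158 — 5 statements merged into one kernel-verified Lean document; each statement's English description precedes it below -/
import Mathlib

section
/- For a rational number k, the polynomial P_k = X³ − kX² + (k−3)X + 1 has a root in ℚ (equivalently, is reducible over ℚ) if and only if there exist nonzero integers p and q with p ≠ q such that k = (p³ − 3pq² + q³)/(pq(p − q)). -/
theorem stmt2 (k : ℚ) :
    (∃ x : ℚ, x ^ 3 - k * x ^ 2 + (k - 3) * x + 1 = 0) ↔
      ∃ p q : ℤ, p ≠ 0 ∧ q ≠ 0 ∧ p ≠ q ∧
        k = ((p : ℚ) ^ 3 - 3 * p * q ^ 2 + q ^ 3) / ((p : ℚ) * q * (p - q)) := by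
  constructor
  · rintro ⟨x, hx⟩
    obtain ⟨p, q, hq, rfl⟩ : ∃ p q : ℤ, (q : ℚ) ≠ 0 ∧ x = p / q :=
      ⟨x.num, x.den, by simp, by simp [Rat.num_div_den]⟩
    have hp : (p : ℚ) ≠ 0 := by
      intro h
      norm_num [h] at hx
    have hpq : (p : ℚ) ≠ q := by
      intro h
      rw [h, div_self hq] at hx
      linarith
    refine ⟨p, q, by exact_mod_cast hp, by exact_mod_cast hq, by exact_mod_cast hpq, ?_⟩
    rw [eq_div_iff (mul_ne_zero (mul_ne_zero hp hq) (sub_ne_zero.mpr hpq))]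
    field_simp at hx
    linear_combination -hx
  · rintro ⟨p, q, hp, hq, hpq, hk⟩
    have hp' : (p : ℚ) ≠ 0 := by exact_mod_cast hp
    have hq' : (q : ℚ) ≠ 0 := by exact_mod_cast hq
    have hpq' : (p : ℚ) ≠ q := by exact_mod_cast hpq
    rw [eq_div_iff (mul_ne_zero (mul_ne_zero hp' hq') (sub_ne_zero.mpr hpq'))] at hk
    refine ⟨p / q, ?_⟩
    field_simp
    linear_combination -hk
end

section
/- Define a relation R on the set S = {k ∈ ℚ : P_k is irreducible over ℚ} by: k R k' if and only if there exist integers c and d, not both zero, such that c³ + 3c²d − c²dk − cd²k − d³ ≠ 0 and k' = T(c,d,k). Then R is an equivalence relation on S, i.e., R is reflexive, symmetric, and transitive on S. -/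
open Polynomial

/-- The relation `R` on rational parameters: `k R k'` iff there exist integers `c`, `d`,
not both zero, with `c³ + 3c²d − c²dk − cd²k − d³ ≠ 0` and `k' = T(c,d,k)`. -/
def simplestCubicRel (k k' : ℚ) : Prop :=
  ∃ c d : ℤ, ¬(c = 0 ∧ d = 0) ∧
    (c : ℚ) ^ 3 + 3 * c ^ 2 * d - c ^ 2 * d * k - c * d ^ 2 * k - d ^ 3 ≠ 0 ∧
    k' = ((c : ℚ) ^ 3 * k + 9 * c ^ 2 * d + 9 * c * d ^ 2 - 3 * c * d ^ 2 * k - d ^ 3 * k) /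
          ((c : ℚ) ^ 3 + 3 * c ^ 2 * d - c ^ 2 * d * k - c * d ^ 2 * k - d ^ 3)

/-- The form `c² + cd + d²` is anisotropic over `ℤ`. -/
theorem sq_add_mul_add_sq_ne_zero {c d : ℤ} (h : ¬(c = 0 ∧ d = 0)) :
    c ^ 2 + c * d + d ^ 2 ≠ 0 := by
  intro h0
  have hd : d = 0 := by
    have : d ^ 2 = 0 := by nlinarith [sq_nonneg (2 * c + d), sq_nonneg d]
    simpa using this
  subst hd
  exact h ⟨by simpa using h0, rfl⟩

theorem simplestCubicRel_refl (k : ℚ) : simplestCubicRel k k :=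
  ⟨1, 0, by simp, by simp, by simp⟩

/-- The witness `(c, d)` acts as `c + d w` with `w ^ 2 = w - 1`; its conjugate
`(c + d) - d w` reverses the relation. -/
theorem simplestCubicRel.symm {k k' : ℚ} (h : simplestCubicRel k k') :
    simplestCubicRel k' k := by
  obtain ⟨c, d, hcd, hD, hk⟩ := h
  rw [eq_div_iff hD] at hk
  have hn : (c : ℚ) ^ 2 + c * d + d ^ 2 ≠ 0 := by
    exact_mod_cast sq_add_mul_add_sq_ne_zero hcd
  have hne : ((c + d : ℤ) : ℚ) ^ 3 + 3 * (c + d : ℤ) ^ 2 * (-d : ℤ) -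
      (c + d : ℤ) ^ 2 * (-d : ℤ) * k' - (c + d : ℤ) * (-d : ℤ) ^ 2 * k' - (-d : ℤ) ^ 3 ≠ 0 := by
    refine left_ne_zero_of_mul (b := (c : ℚ) ^ 3 + 3 * c ^ 2 * d - c ^ 2 * d * k
      - c * d ^ 2 * k - d ^ 3) ?_
    convert pow_ne_zero 3 hn using 1
    push_cast
    linear_combination ((c : ℚ) + d) * c * d * hk
  refine ⟨c + d, -d, by omega, hne, ?_⟩
  rw [eq_div_iff hne]
  push_cast
  linear_combination -hk

/-- Witnesses compose as `(c + d w) (e + f w)` with `w ^ 2 = w - 1`. -/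
theorem simplestCubicRel.trans {k k' k'' : ℚ} (h : simplestCubicRel k k')
    (h' : simplestCubicRel k' k'') : simplestCubicRel k k'' := by
  obtain ⟨c, d, hcd, hD, hk⟩ := h
  obtain ⟨e, f, hef, hE, hk'⟩ := h'
  rw [eq_div_iff hD] at hk
  rw [eq_div_iff hE] at hk'
  have hden : ((c * e - d * f : ℤ) : ℚ) ^ 3
      + 3 * (c * e - d * f : ℤ) ^ 2 * (c * f + d * e + d * f : ℤ)
      - (c * e - d * f : ℤ) ^ 2 * (c * f + d * e + d * f : ℤ) * k
      - (c * e - d * f : ℤ) * (c * f + d * e + d * f : ℤ) ^ 2 * k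
      - (c * f + d * e + d * f : ℤ) ^ 3 =
      ((e : ℚ) ^ 3 + 3 * e ^ 2 * f - e ^ 2 * f * k' - e * f ^ 2 * k' - f ^ 3) *
      ((c : ℚ) ^ 3 + 3 * c ^ 2 * d - c ^ 2 * d * k - c * d ^ 2 * k - d ^ 3) := by
    push_cast
    linear_combination ((e : ℚ) + f) * e * f * hk
  have hne := mul_ne_zero hE hD
  rw [← hden] at hne
  refine ⟨c * e - d * f, c * f + d * e + d * f, ?_, hne, ?_⟩
  · rintro ⟨h1, h2⟩
    refine mul_ne_zero (sq_add_mul_add_sq_ne_zero hcd) (sq_add_mul_add_sq_ne_zero hef) ?_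
    linear_combination (c * e - d * f + (c * f + d * e + d * f)) * h1
      + (c * f + d * e + d * f) * h2
  · rw [eq_div_iff hne, hden]
    push_cast
    linear_combination
      ((c : ℚ) ^ 3 + 3 * c ^ 2 * d - c ^ 2 * d * k - c * d ^ 2 * k - d ^ 3) * hk'
      + ((e : ℚ) ^ 3 - 3 * e * f ^ 2 - f ^ 3) * hk

theorem stmt3 :
    (∀ k : ℚ, Irreducible (X ^ 3 - C k * X ^ 2 + C (k - 3) * X + 1 : ℚ[X]) →
      simplestCubicRel k k) ∧
    (∀ k k' : ℚ, Irreducible (X ^ 3 - C k * X ^ 2 + C (k - 3) * X + 1 : ℚ[X]) →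
      Irreducible (X ^ 3 - C k' * X ^ 2 + C (k' - 3) * X + 1 : ℚ[X]) →
      simplestCubicRel k k' → simplestCubicRel k' k) ∧
    (∀ k k' k'' : ℚ, Irreducible (X ^ 3 - C k * X ^ 2 + C (k - 3) * X + 1 : ℚ[X]) →
      Irreducible (X ^ 3 - C k' * X ^ 2 + C (k' - 3) * X + 1 : ℚ[X]) →
      Irreducible (X ^ 3 - C k'' * X ^ 2 + C (k'' - 3) * X + 1 : ℚ[X]) →
      simplestCubicRel k k' → simplestCubicRel k' k'' → simplestCubicRel k k'') :=
  ⟨fun k _ => simplestCubicRel_refl k, fun _ _ _ _ h => h.symm,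
    fun _ _ _ _ _ _ h h' => h.trans h'⟩
end

section
/- Let ω ∈ ℂ be algebraic of degree 3 over ℚ. The set of roots in ℂ of the minimal polynomial of ω over ℚ equals {ω, (ω−1)/ω, −1/(ω−1)} if and only if there exists a rational number k such that P_k = X³ − kX² + (k−3)X + 1 is irreducible over ℚ and ω is a root of P_k; moreover in that case k = ω + (ω−1)/ω − 1/(ω−1). -/
open Polynomial

/-- An element of degree `3` is not a root of a monic polynomial of smaller degree. -/
lemma aeval_ne_zero_of_natDegree_lt_three {ω : ℂ} (hdeg : (minpoly ℚ ω).natDegree = 3)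
    {p : ℚ[X]} (hp : p.Monic) (hlt : p.natDegree < 3) : aeval ω p ≠ 0 := by
  intro h
  have := natDegree_le_of_dvd (minpoly.dvd ℚ ω h) hp.ne_zero
  omega

lemma simplestCubic_natDegree (k : ℚ) :
    (X ^ 3 - C k * X ^ 2 + C (k - 3) * X + 1 : ℚ[X]).natDegree = 3 := by
  compute_degree!

lemma simplestCubic_monic (k : ℚ) :
    (X ^ 3 - C k * X ^ 2 + C (k - 3) * X + 1 : ℚ[X]).Monic := by
  monicity!

lemma aeval_simplestCubic (k : ℚ) (z : ℂ) :
    aeval z (X ^ 3 - C k * X ^ 2 + C (k - 3) * X + 1 : ℚ[X]) =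
      z ^ 3 - (k : ℂ) * z ^ 2 + ((k : ℂ) - 3) * z + 1 := by
  simp

lemma minpoly_eq_simplestCubic {ω : ℂ} (halg : IsAlgebraic ℚ ω)
    (hdeg : (minpoly ℚ ω).natDegree = 3) {k : ℚ}
    (hk : ω ^ 3 - (k : ℂ) * ω ^ 2 + ((k : ℂ) - 3) * ω + 1 = 0) :
    minpoly ℚ ω = X ^ 3 - C k * X ^ 2 + C (k - 3) * X + 1 :=
  (eq_of_monic_of_dvd_of_natDegree_le (minpoly.monic halg.isIntegral) (simplestCubic_monic k)
    (minpoly.dvd ℚ ω ((aeval_simplestCubic k ω).trans hk))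
    (by rw [simplestCubic_natDegree, hdeg])).symm

lemma simplestCubic_eq_zero_iff {ω κ : ℂ} (h0 : ω ≠ 0) (h1 : ω - 1 ≠ 0) :
    ω ^ 3 - κ * ω ^ 2 + (κ - 3) * ω + 1 = 0 ↔ κ = ω + (ω - 1) / ω - 1 / (ω - 1) := by
  constructor
  · intro h
    field_simp
    linear_combination -h
  · rintro rfl
    field_simp
    ring

/-- The sum of three distinct roots of a monic cubic. -/
lemma add_add_eq_neg_of_cubic_roots {K : Type*} [Field K] {a b c x y z : K}
    (hxy : x ≠ y) (hxz : x ≠ z) (hyz : y ≠ z)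
    (hx : x ^ 3 + a * x ^ 2 + b * x + c = 0) (hy : y ^ 3 + a * y ^ 2 + b * y + c = 0)
    (hz : z ^ 3 + a * z ^ 2 + b * z + c = 0) : x + y + z = -a := by
  have hne : (x - y) * (x - z) * (y - z) ≠ 0 :=
    mul_ne_zero (mul_ne_zero (sub_ne_zero.2 hxy) (sub_ne_zero.2 hxz)) (sub_ne_zero.2 hyz)
  apply mul_left_cancel₀ hne
  linear_combination (y - z) * hx - (x - z) * hy + (x - y) * hz

theorem stmt4 (ω : ℂ) (halg : IsAlgebraic ℚ ω) (hdeg : (minpoly ℚ ω).natDegree = 3) :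
    (({z : ℂ | (aeval z) (minpoly ℚ ω) = 0} = {ω, (ω - 1) / ω, -1 / (ω - 1)}) ↔
      ∃ k : ℚ, Irreducible (X ^ 3 - C k * X ^ 2 + C (k - 3) * X + 1 : ℚ[X]) ∧
        ω ^ 3 - (k : ℂ) * ω ^ 2 + ((k : ℂ) - 3) * ω + 1 = 0) ∧
    (∀ k : ℚ, Irreducible (X ^ 3 - C k * X ^ 2 + C (k - 3) * X + 1 : ℚ[X]) →
      ω ^ 3 - (k : ℂ) * ω ^ 2 + ((k : ℂ) - 3) * ω + 1 = 0 →
      (k : ℂ) = ω + (ω - 1) / ω - 1 / (ω - 1)) := by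
  have h0 : ω ≠ 0 := by
    simpa using aeval_ne_zero_of_natDegree_lt_three hdeg monic_X (by simp)
  have h1 : ω - 1 ≠ 0 := by
    simpa using aeval_ne_zero_of_natDegree_lt_three hdeg (monic_X_sub_C 1)
      (by rw [natDegree_X_sub_C]; norm_num)
  have h2 : ω ^ 2 - ω + 1 ≠ 0 := by
    have hd : (X ^ 2 - X + 1 : ℚ[X]).natDegree = 2 := by compute_degree!
    have hm : (X ^ 2 - X + 1 : ℚ[X]).Monic := by monicity!
    have h := aeval_ne_zero_of_natDegree_lt_three hdeg hm (by omega)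
    rwa [map_add, map_sub, map_pow, aeval_X, map_one] at h
  refine ⟨⟨fun hset => ?_, ?_⟩, fun k _ hk => (simplestCubic_eq_zero_iff h0 h1).1 hk⟩
  · have hroot (z : ℂ) (hz : z ∈ ({ω, (ω - 1) / ω, -1 / (ω - 1)} : Set ℂ)) :
        z ^ 3 + ((minpoly ℚ ω).coeff 2 : ℂ) * z ^ 2 + ((minpoly ℚ ω).coeff 1 : ℂ) * z +
          ((minpoly ℚ ω).coeff 0 : ℂ) = 0 := by
      rw [← hset, Set.mem_ofPred_eq, aeval_eq_sum_range, hdeg] at hz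
      have hlead : (minpoly ℚ ω).coeff 3 = 1 := by
        rw [← hdeg]
        exact minpoly.monic halg.isIntegral
      simp only [Finset.sum_range_succ, Finset.sum_range_zero, hlead, Rat.smul_def] at hz
      push_cast at hz
      linear_combination hz
    have hsum := add_add_eq_neg_of_cubic_roots
      (x := ω) (y := (ω - 1) / ω) (z := -1 / (ω - 1))
      (fun h => h2 (by field_simp at h; linear_combination h))
      (fun h => h2 (by field_simp at h; linear_combination h))
      (fun h => h2 (by field_simp at h; linear_combination h))
      (hroot _ (by simp)) (hroot _ (by simp)) (hroot _ (by simp))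
    have hk : ω ^ 3 - ((-(minpoly ℚ ω).coeff 2 : ℚ) : ℂ) * ω ^ 2 +
        (((-(minpoly ℚ ω).coeff 2 : ℚ) : ℂ) - 3) * ω + 1 = 0 := by
      rw [simplestCubic_eq_zero_iff h0 h1]
      push_cast
      rw [← hsum]
      ring
    refine ⟨_, ?_, hk⟩
    rw [← minpoly_eq_simplestCubic halg hdeg hk]
    exact minpoly.irreducible halg.isIntegral
  · rintro ⟨k, -, hk⟩
    ext z
    have hfac : z ^ 3 - (k : ℂ) * z ^ 2 + ((k : ℂ) - 3) * z + 1 =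
        (z - ω) * ((z - (ω - 1) / ω) * (z - -1 / (ω - 1))) := by
      rw [(simplestCubic_eq_zero_iff h0 h1).1 hk]
      field_simp
      ring
    rw [Set.mem_ofPred_eq, minpoly_eq_simplestCubic halg hdeg hk, aeval_simplestCubic, hfac]
    simp only [mul_eq_zero, sub_eq_zero, Set.mem_insert_iff, Set.mem_singleton_iff]
end

section
/- Let k be a rational number, let α ∈ ℂ be a root of P_k = X³ − kX² + (k−3)X + 1 with α ∉ ℚ, and let c, d be integers, not both zero, such that D := c³ + 3c²d − c²dk − cd²k − d³ ≠ 0 and cα + d ≠ 0. Then ω := ((c+d)α − c)/(cα + d) is a root of X³ − tX² + (t−3)X + 1, where t = (c³k + 9c²d + 9cd² − 3cd²k − d³k)/D. -/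
theorem stmt7 (k : ℚ) (α : ℂ)
    (hα : α ^ 3 - (k : ℂ) * α ^ 2 + ((k : ℂ) - 3) * α + 1 = 0)
    (hαQ : α ∉ Set.range ((↑) : ℚ → ℂ))
    (c d : ℤ) (hcd : ¬(c = 0 ∧ d = 0))
    (hD : (c : ℚ) ^ 3 + 3 * c ^ 2 * d - c ^ 2 * d * k - c * d ^ 2 * k - d ^ 3 ≠ 0)
    (hden : (c : ℂ) * α + d ≠ 0) :
    letI t : ℚ := ((c : ℚ) ^ 3 * k + 9 * c ^ 2 * d + 9 * c * d ^ 2 - 3 * c * d ^ 2 * k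
        - d ^ 3 * k) /
      ((c : ℚ) ^ 3 + 3 * c ^ 2 * d - c ^ 2 * d * k - c * d ^ 2 * k - d ^ 3)
    letI ω : ℂ := (((c : ℂ) + d) * α - c) / ((c : ℂ) * α + d)
    ω ^ 3 - (t : ℂ) * ω ^ 2 + ((t : ℂ) - 3) * ω + 1 = 0 := by
  have hD' : (c : ℂ) ^ 3 + 3 * c ^ 2 * d - c ^ 2 * d * k - c * d ^ 2 * k - d ^ 3 ≠ 0 := by
    exact_mod_cast hD
  push_cast
  set D : ℂ := (c : ℂ) ^ 3 + 3 * c ^ 2 * d - c ^ 2 * d * k - c * d ^ 2 * k - d ^ 3 with hDdef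
  set T : ℂ := (c : ℂ) ^ 3 * k + 9 * c ^ 2 * d + 9 * c * d ^ 2 - 3 * c * d ^ 2 * k
    - d ^ 3 * k with hTdef
  set M : ℂ := (c : ℂ) * α + d with hMdef
  set N : ℂ := ((c : ℂ) + d) * α - c with hNdef
  have key : D * (N ^ 3 - 3 * N * M ^ 2 + M ^ 3) - T * (N ^ 2 * M - N * M ^ 2) = 0 := by
    rw [hDdef, hTdef, hMdef, hNdef]
    linear_combination
      (((c : ℂ) ^ 3 + 3 * c ^ 2 * d - c ^ 2 * d * k - c * d ^ 2 * k - d ^ 3)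
          * (-c ^ 3 + 3 * c * d ^ 2 + d ^ 3)
        - ((c : ℂ) ^ 3 * k + 9 * c ^ 2 * d + 9 * c * d ^ 2 - 3 * c * d ^ 2 * k - d ^ 3 * k)
          * (c ^ 2 * d + c * d ^ 2)) * hα
  have hquot : (N / M) ^ 3 - T / D * (N / M) ^ 2 + (T / D - 3) * (N / M) + 1
      = (D * (N ^ 3 - 3 * N * M ^ 2 + M ^ 3) - T * (N ^ 2 * M - N * M ^ 2)) / (D * M ^ 3) := by
    clear_value D T M N
    field_simp
    ring
  rw [hquot, key, zero_div]
end

section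
/- Let k be a rational number and let ω ∈ ℂ be a root of P_k = X³ − kX² + (k−3)X + 1 with ω ≠ 0 and ω ≠ 1. Then (ω−1)/ω and −1/(ω−1) are also roots of P_k. -/
theorem stmt8 (k : ℚ) (ω : ℂ)
    (hω : ω ^ 3 - (k : ℂ) * ω ^ 2 + ((k : ℂ) - 3) * ω + 1 = 0)
    (h0 : ω ≠ 0) (h1 : ω ≠ 1) :
    ((ω - 1) / ω) ^ 3 - (k : ℂ) * ((ω - 1) / ω) ^ 2 + ((k : ℂ) - 3) * ((ω - 1) / ω) + 1 = 0 ∧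
    (-1 / (ω - 1)) ^ 3 - (k : ℂ) * (-1 / (ω - 1)) ^ 2 + ((k : ℂ) - 3) * (-1 / (ω - 1)) + 1 = 0 := by
  have h1' : ω - 1 ≠ 0 := sub_ne_zero.mpr h1
  constructor
  · calc
      _ = -(ω ^ 3 - (k : ℂ) * ω ^ 2 + ((k : ℂ) - 3) * ω + 1) / ω ^ 3 := by
        field_simp
        ring
      _ = 0 := by rw [hω, neg_zero, zero_div]
  · calc
      _ = (ω ^ 3 - (k : ℂ) * ω ^ 2 + ((k : ℂ) - 3) * ω + 1) / (ω - 1) ^ 3 := by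
        field_simp
        ring
      _ = 0 := by rw [hω, zero_div]
end
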